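/- (Super Cramer's rule, odd positions.) Let A = [[X, α],[β, Y]] be an invertible even (k|l)-supermatrix over Λ (equivalently, X and Y are both invertible), set m := k+l, and let x, y ∈ Λ^m be row vectors with x·A = y, i.e. Σ_p x_p·a_{pj} = y_j for all j. Write y = (y′, y″) with y′ its first k entries and y″ its last l entries. Then for every i with k < i ≤ m: x_i·det(Y − β·X⁻¹·α) = Σ_{j=1}^{l} (y″ − y′·X⁻¹·α)_j·C_{(i−k)j}, where C_{(i−k)j} denotes the (i−k, j)-cofactor of the matrix Y − β·X⁻¹·α over the commutative ring Λ₀; that is, x_i·det(Y − β·X⁻¹·α) equals the row-(i−k) Laplace expansion of the determinant of the matrix obtained from Y − β·X⁻¹·α by replacing its (i−k)-th row with the row y″ − y′·X⁻¹·α. Equivalently, x_i = ber*(A_i(y))·ber*(A)⁻¹, where ber*(A_i(y)) is obtained from the expression ber*(A) = det(X)⁻¹·det(Y − β·X⁻¹·α), which is Λ-linear in the entries of row i of A, by substituting y_j for a_{ij} (j = 1,…,m). -/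

import Mathlib

noncomputable section

open ExteriorAlgebra

/-- `Λ n`: the exterior algebra of `ℂⁿ` (with its `n` odd generators `βᵢ`). -/
abbrev SuperAlg (n : ℕ) : Type := ExteriorAlgebra ℂ (Fin n → ℂ)

/-- The even part `Λ₀` of the exterior algebra, i.e. the degree-`0̄` part of its `ℤ₂`-grading. -/
def evenPart (n : ℕ) : Submodule ℂ (SuperAlg n) :=
  CliffordAlgebra.evenOdd (0 : QuadraticForm ℂ (Fin n → ℂ)) 0

/-- The odd part `Λ₁` of the exterior algebra, i.e. the degree-`1̄` part of its `ℤ₂`-grading. -/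
def oddPart (n : ℕ) : Submodule ℂ (SuperAlg n) :=
  CliffordAlgebra.evenOdd (0 : QuadraticForm ℂ (Fin n → ℂ)) 1

/-- The determinant of a square matrix over a (possibly noncommutative) ring, given by the
Leibniz formula, the product over each permutation being taken in the canonical order of the
index set.  For matrices whose entries lie in a central commutative subring (such as `Λ₀ ⊆ Λ`)
this is the usual determinant. -/
def ncdet {R : Type*} [Ring R] {k : ℕ} (M : Matrix (Fin k) (Fin k) R) : R :=
  ∑ σ : Equiv.Perm (Fin k), ((Equiv.Perm.sign σ : ℤˣ) : ℤ) • (List.ofFn fun i => M (σ i) i).prod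

/-- The even-even block `X` of a `(k|l)`-block matrix. -/
def Xblk (n k l : ℕ) (A : Matrix (Fin (k + l)) (Fin (k + l)) (SuperAlg n)) :
    Matrix (Fin k) (Fin k) (SuperAlg n) :=
  fun i j => A (Fin.castAdd l i) (Fin.castAdd l j)

/-- The even-odd block `α` of a `(k|l)`-block matrix. -/
def alphaBlk (n k l : ℕ) (A : Matrix (Fin (k + l)) (Fin (k + l)) (SuperAlg n)) :
    Matrix (Fin k) (Fin l) (SuperAlg n) :=
  fun i j => A (Fin.castAdd l i) (Fin.natAdd k j)

/-- The odd-even block `β` of a `(k|l)`-block matrix. -/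
def betaBlk (n k l : ℕ) (A : Matrix (Fin (k + l)) (Fin (k + l)) (SuperAlg n)) :
    Matrix (Fin l) (Fin k) (SuperAlg n) :=
  fun i j => A (Fin.natAdd k i) (Fin.castAdd l j)

/-- The odd-odd block `Y` of a `(k|l)`-block matrix. -/
def Yblk (n k l : ℕ) (A : Matrix (Fin (k + l)) (Fin (k + l)) (SuperAlg n)) :
    Matrix (Fin l) (Fin l) (SuperAlg n) :=
  fun i j => A (Fin.natAdd k i) (Fin.natAdd k j)

/-- `A` is an even `(k|l)`-supermatrix: the diagonal blocks `X`, `Y` have entries in `Λ₀` and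
the off-diagonal blocks `α`, `β` have entries in `Λ₁`. -/
def IsEvenSupermatrix (n k l : ℕ) (A : Matrix (Fin (k + l)) (Fin (k + l)) (SuperAlg n)) : Prop :=
  (∀ i j, Xblk n k l A i j ∈ evenPart n) ∧ (∀ i j, Yblk n k l A i j ∈ evenPart n) ∧
  (∀ i j, alphaBlk n k l A i j ∈ oddPart n) ∧ (∀ i j, betaBlk n k l A i j ∈ oddPart n)

/-- The Berezinian `ber(A) = det(X − α·Y⁻¹·β)·det(Y)⁻¹` (defined when `Y` is invertible). -/
def ber (n k l : ℕ) (A : Matrix (Fin (k + l)) (Fin (k + l)) (SuperAlg n)) : SuperAlg n :=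
  ncdet (Xblk n k l A - alphaBlk n k l A * Ring.inverse (Yblk n k l A) * betaBlk n k l A) *
    Ring.inverse (ncdet (Yblk n k l A))

/-- The inverse Berezinian `ber*(A) = det(X)⁻¹·det(Y − β·X⁻¹·α)` (defined when `X` is
invertible). -/
def berStar (n k l : ℕ) (A : Matrix (Fin (k + l)) (Fin (k + l)) (SuperAlg n)) : SuperAlg n :=
  Ring.inverse (ncdet (Xblk n k l A)) *
    ncdet (Yblk n k l A - betaBlk n k l A * Ring.inverse (Xblk n k l A) * alphaBlk n k l A)

section Helpers

variable {R : Type*} [Ring R]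

theorem aux_comm (a : Subring.center R) (b : R) : b * (a : R) = (a : R) * b :=
  Subring.mem_center_iff.1 a.2 b

theorem ncdet_map {k : ℕ} (M : Matrix (Fin k) (Fin k) (Subring.center R)) :
    ncdet (M.map (Subring.center R).subtype) = ((M.det : Subring.center R) : R) := by
  have h : ((M.det : Subring.center R) : R) = (Subring.center R).subtype M.det := rfl
  rw [h, Matrix.det_apply, map_sum, ncdet]
  refine Finset.sum_congr rfl fun σ _ => ?_
  rw [Units.smul_def, map_zsmul, ← List.prod_ofFn, map_list_prod, List.map_ofFn]
  rfl

theorem aux_prod {k : ℕ} (g : Fin k → R) (h : Fin k → Subring.center R) (p : Fin k)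
    (h1 : h p = 1) (hg : ∀ q, q ≠ p → g q = h q) :
    (List.ofFn g).prod = g p * ((∏ q, h q : Subring.center R) : R) := by
  induction k with
  | zero => exact p.elim0
  | succ k ih =>
    rw [List.ofFn_succ, List.prod_cons, Fin.prod_univ_succ]
    refine Fin.cases (motive := fun p => h p = 1 → (∀ q, q ≠ p → g q = h q) → g 0 *
      (List.ofFn fun i : Fin k => g i.succ).prod = g p * ((h 0 * ∏ q : Fin k, h q.succ : Subring.center R) : R)) ?_ ?_ p h1 hg
    · intro h1 hg
      have : (fun i : Fin k => g i.succ) = fun i => (Subring.center R).subtype (h i.succ) := by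
        funext i; exact hg _ (Fin.succ_ne_zero _)
      rw [this, h1, one_mul, ← List.prod_ofFn]
      congr 1
      have := map_list_prod (Subring.center R).subtype (List.ofFn fun q : Fin k => h q.succ)
      rw [List.map_ofFn] at this
      exact this.symm
    · intro p h1 hg
      rw [ih (fun i => g i.succ) (fun i => h i.succ) p h1
        (fun q hq => hg _ (fun e => hq (Fin.succ_injective _ e))), hg 0 (Fin.succ_ne_zero _).symm]
      rw [Subring.coe_mul, ← mul_assoc, ← mul_assoc, aux_comm (h 0)]

theorem ncdet_updateRow {k : ℕ} (M : Matrix (Fin k) (Fin k) (Subring.center R)) (i : Fin k)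
    (w : Fin k → R) :
    ncdet ((M.map (Subring.center R).subtype).updateRow i w) =
      ∑ j, w j * ((M.adjugate j i : Subring.center R) : R) := by
  have key : ∀ j, ((M.adjugate j i : Subring.center R) : R) =
      ∑ σ : Equiv.Perm (Fin k), if σ j = i then ((Equiv.Perm.sign σ : ℤˣ) : ℤ) •
        ((∏ p, if σ p = i then 1 else M (σ p) p : Subring.center R) : R) else 0 := by
    intro j
    change (Subring.center R).subtype _ = _
    rw [Matrix.adjugate_apply, Matrix.det_apply, map_sum]
    refine Finset.sum_congr rfl fun σ _ => ?_
    rw [Units.smul_def, map_zsmul]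
    split_ifs with h
    · congr 1
      change _ = (Subring.center R).subtype _
      congr 1
      refine Finset.prod_congr rfl fun p _ => ?_
      by_cases hp : σ p = i
      · have : p = j := σ.injective (hp.trans h.symm)
        subst this
        simp [h, Matrix.updateRow_apply]
      · simp [hp, Matrix.updateRow_apply]
    · have : (∏ p, (M.updateRow i (Pi.single j 1)) (σ p) p) = 0 := by
        apply Finset.prod_eq_zero (Finset.mem_univ (σ.symm i))
        have : σ.symm i ≠ j := fun e => h (by rw [← e]; simp)
        simp [Matrix.updateRow_apply, this]
      rw [this]; simp
  simp_rw [key, Finset.mul_sum]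
  rw [Finset.sum_comm, ncdet]
  refine Finset.sum_congr rfl fun σ _ => ?_
  rw [Finset.sum_eq_single (σ.symm i)]
  · rw [aux_prod _ (fun p => if σ p = i then 1 else M (σ p) p) (σ.symm i) (by simp)]
    · rw [if_pos (by simp), mul_smul_comm]
      simp
    · intro q hq
      have : σ q ≠ i := fun e => hq (by rw [← e]; simp)
      simp [Matrix.updateRow_apply, this]
  · intro j _ hj
    have : σ j ≠ i := fun e => hj (by rw [← e]; simp)
    simp [this]
  · simp

theorem aux_cramer {k : ℕ} (M : Matrix (Fin k) (Fin k) (Subring.center R)) (i : Fin k)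
    (v w : Fin k → R) (hw : ∀ j, w j = ∑ p, v p * (M p j : R)) :
    ∑ j, w j * ((M.adjugate j i : Subring.center R) : R) = v i * ((M.det : Subring.center R) : R) := by
  simp_rw [hw, Finset.sum_mul, mul_assoc]
  rw [Finset.sum_comm]
  simp_rw [← Finset.mul_sum]
  have : ∀ p, ∑ j, (M p j : R) * ((M.adjugate j i : Subring.center R) : R) =
      ((if p = i then M.det else 0 : Subring.center R) : R) := by
    intro p
    have := congrFun (congrFun M.mul_adjugate p) i
    rw [Matrix.mul_apply, Matrix.smul_apply, Matrix.one_apply] at this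
    rw [← (by simpa using this : _ = (if p = i then M.det else 0))]
    push_cast
    rfl
  simp_rw [this]
  rw [Finset.sum_eq_single i] <;> simp +contextual

theorem aux_lift {k l : ℕ} (X : Matrix (Fin k) (Fin l) R) (h : ∀ i j, X i j ∈ Subring.center R) :
    ∃ X' : Matrix (Fin k) (Fin l) (Subring.center R), X = X'.map (Subring.center R).subtype :=
  ⟨fun i j => ⟨X i j, h i j⟩, rfl⟩

theorem aux_inv {k : ℕ} (X : Matrix (Fin k) (Fin k) R) (h : ∀ i j, X i j ∈ Subring.center R)
    (hX : IsUnit X) (i j : Fin k) : Ring.inverse X i j ∈ Subring.center R := by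
  rw [Subring.mem_center_iff]
  intro g
  have hc : Commute (Matrix.diagonal fun _ : Fin k => g) X := by
    ext a b
    simp only [Matrix.diagonal_mul, Matrix.mul_diagonal]
    exact Subring.mem_center_iff.1 (h a b) g
  obtain ⟨u, rfl⟩ := hX
  rw [Ring.inverse_unit]
  have := congrFun (congrFun (hc.units_inv_right).eq i) j
  simpa only [Matrix.diagonal_mul, Matrix.mul_diagonal] using this

theorem aux_map_inj {k l : ℕ} {X Y : Matrix (Fin k) (Fin l) (Subring.center R)}
    (h : X.map (Subring.center R).subtype = Y.map (Subring.center R).subtype) : X = Y := by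
  ext i j
  exact congrFun (congrFun h i) j

theorem aux_det_unit {k : ℕ} (X : Matrix (Fin k) (Fin k) (Subring.center R))
    (hX : IsUnit (X.map (Subring.center R).subtype)) : IsUnit X.det := by
  obtain ⟨Z, hZ⟩ := aux_lift _ (aux_inv (X.map (Subring.center R).subtype) (fun i j => (X i j).2) hX)
  have h := Ring.mul_inverse_cancel _ hX
  rw [hZ, ← Matrix.map_mul] at h
  have h2 : X * Z = 1 := by
    apply aux_map_inj
    rw [h]
    simp
  rw [← Matrix.isUnit_iff_isUnit_det]
  exact IsUnit.of_mul_eq_one _ h2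

theorem aux_det_nil {S : Type*} [CommRing S] {k : ℕ} (Y N : Matrix (Fin k) (Fin k) S)
    (hN : ∀ i j, IsNilpotent (N i j)) (hY : IsUnit Y.det) : IsUnit (Y - N).det := by
  have h : Ideal.Quotient.mk (nilradical S) (Y - N).det = Ideal.Quotient.mk (nilradical S) Y.det := by
    rw [RingHom.map_det, RingHom.map_det]
    congr 1
    ext i j
    simp only [RingHom.mapMatrix_apply, Matrix.map_apply, Matrix.sub_apply, map_sub]
    rw [Ideal.Quotient.eq_zero_iff_mem.2 (mem_nilradical.2 (hN i j)), sub_zero]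
  have h2 := mem_nilradical.1 (Ideal.Quotient.eq.1 h)
  have := h2.isUnit_add_left_of_commute hY (Commute.all _ _)
  simpa using this

end Helpers

section Super

variable {n : ℕ}

theorem aux_iota (u v : Fin n → ℂ) :
    (ExteriorAlgebra.ι ℂ u * ExteriorAlgebra.ι ℂ v : SuperAlg n) =
      - (ExteriorAlgebra.ι ℂ v * ExteriorAlgebra.ι ℂ u) :=
  eq_neg_of_add_eq_zero_left (ExteriorAlgebra.ι_add_mul_swap u v)

theorem aux_pair (u v : Fin n → ℂ) (b : SuperAlg n) :
    Commute (ExteriorAlgebra.ι ℂ u * ExteriorAlgebra.ι ℂ v) b := by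
  induction b using ExteriorAlgebra.induction with
  | algebraMap r => exact (Algebra.commutes r _).symm
  | ι w =>
    change _ = _
    rw [mul_assoc, aux_iota v w, mul_neg, ← mul_assoc, aux_iota u w, neg_mul, neg_neg, mul_assoc]
  | mul a b ha hb => exact ha.mul_right hb
  | add a b ha hb => exact ha.add_right hb

theorem even_comm {a : SuperAlg n} (ha : a ∈ evenPart n) (b : SuperAlg n) : Commute a b := by
  unfold evenPart at ha
  induction a, ha using CliffordAlgebra.even_induction with
  | algebraMap r => exact Algebra.commutes r _
  | add x y hx hy h1 h2 => exact h1.add_left h2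
  | ι_mul_ι_mul u v x hx h => exact (aux_pair u v b).mul_left h

theorem even_center {a : SuperAlg n} (ha : a ∈ evenPart n) : a ∈ Subring.center (SuperAlg n) :=
  Subring.mem_center_iff.2 fun b => ((even_comm ha b).eq).symm

theorem iota_odd (v : Fin n → ℂ) {a : SuperAlg n} (ha : a ∈ oddPart n) :
    ExteriorAlgebra.ι ℂ v * a = - (a * ExteriorAlgebra.ι ℂ v) := by
  unfold oddPart at ha
  induction a, ha using CliffordAlgebra.odd_induction with
  | ι w => exact aux_iota v w
  | add x y hx hy h1 h2 => rw [mul_add, add_mul, h1, h2, neg_add]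
  | ι_mul_ι_mul u w x hx h =>
    have := (aux_pair u w (ExteriorAlgebra.ι ℂ v)).eq
    change _ * (ExteriorAlgebra.ι ℂ u * ExteriorAlgebra.ι ℂ w * x) =
      -((ExteriorAlgebra.ι ℂ u * ExteriorAlgebra.ι ℂ w * x) * _)
    rw [← mul_assoc, ← this, mul_assoc, h, mul_neg, mul_assoc _ x]

theorem odd_odd {a b : SuperAlg n} (ha : a ∈ oddPart n) (hb : b ∈ oddPart n) :
    a * b = - (b * a) := by
  unfold oddPart at ha
  induction a, ha using CliffordAlgebra.odd_induction with
  | ι w => exact iota_odd w hb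
  | add x y hx hy h1 h2 => rw [mul_add, add_mul, h1, h2, neg_add]
  | ι_mul_ι_mul u w x hx h =>
    have := (aux_pair u w b).eq
    change (ExteriorAlgebra.ι ℂ u * ExteriorAlgebra.ι ℂ w * x) * _ =
      -(_ * (ExteriorAlgebra.ι ℂ u * ExteriorAlgebra.ι ℂ w * x))
    rw [← mul_assoc b, ← this, mul_assoc, h, mul_neg, mul_assoc _ b]

theorem odd_sq {a : SuperAlg n} (ha : a ∈ oddPart n) : a * a = 0 := by
  have h := odd_odd ha ha
  have h2 : (2 : ℂ) • (a * a) = 0 := by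
    rw [two_smul]; nth_rewrite 1 [h]; simp
  exact (smul_eq_zero.1 h2).resolve_left two_ne_zero

theorem odd_mul_odd {a b : SuperAlg n} (ha : a ∈ oddPart n) (hb : b ∈ oddPart n) :
    a * b ∈ evenPart n := by
  have := CliffordAlgebra.evenOdd_mul_le (0 : QuadraticForm ℂ (Fin n → ℂ)) 1 1
    (Submodule.mul_mem_mul ha hb)
  exact this

theorem odd_mul_nil {a b : SuperAlg n} (ha : a ∈ oddPart n) (hb : b ∈ oddPart n) :
    (a * b) * (a * b) = 0 := by
  rw [mul_assoc, ← mul_assoc b, odd_odd hb ha, neg_mul, mul_assoc, odd_sq hb]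
  simp

theorem aux_term {a b z : SuperAlg n} (ha : a ∈ oddPart n) (hb : b ∈ oddPart n)
    (hz : z ∈ Subring.center (SuperAlg n)) :
    ∃ c : Subring.center (SuperAlg n), (c : SuperAlg n) = a * z * b ∧ IsNilpotent c := by
  have h : a * z * b = z * (a * b) := by
    rw [Subring.mem_center_iff.1 hz a, mul_assoc]
  refine ⟨⟨z, hz⟩ * ⟨a * b, even_center (odd_mul_odd ha hb)⟩, h.symm, ?_⟩
  apply Commute.isNilpotent_mul_left (Commute.all _ _)
  refine ⟨2, ?_⟩
  rw [pow_two]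
  exact Subtype.ext (odd_mul_nil ha hb)

end Super

section Blocks

theorem aux_blocks (n k l : ℕ)
    (A : Matrix (Fin (k + l)) (Fin (k + l)) (SuperAlg n))
    (i : Fin l) (y : Fin (k + l) → SuperAlg n) :
    Yblk n k l (A.updateRow (Fin.natAdd k i) y) -
      betaBlk n k l (A.updateRow (Fin.natAdd k i) y) *
        Ring.inverse (Xblk n k l (A.updateRow (Fin.natAdd k i) y)) *
        alphaBlk n k l (A.updateRow (Fin.natAdd k i) y) =
    (Yblk n k l A - betaBlk n k l A * Ring.inverse (Xblk n k l A) * alphaBlk n k l A).updateRow i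
      (fun j => y (Fin.natAdd k j) - ∑ r : Fin k, ∑ q : Fin k,
              y (Fin.castAdd l r) * Ring.inverse (Xblk n k l A) r q *
                alphaBlk n k l A q j) ∧
    Xblk n k l (A.updateRow (Fin.natAdd k i) y) = Xblk n k l A := by
  have hne : ∀ a : Fin k, Fin.castAdd l a ≠ Fin.natAdd k i := by
    intro a h
    have := congrArg Fin.val h
    simp at this
    omega
  have hX : Xblk n k l (A.updateRow (Fin.natAdd k i) y) = Xblk n k l A := by
    ext a b; simp [Xblk, Matrix.updateRow_apply, hne]
  have ha : alphaBlk n k l (A.updateRow (Fin.natAdd k i) y) = alphaBlk n k l A := by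
    ext a b; simp [alphaBlk, Matrix.updateRow_apply, hne]
  refine ⟨?_, hX⟩
  rw [hX, ha]
  ext a j
  rw [Matrix.updateRow_apply]
  split_ifs with h
  · subst h
    simp only [Matrix.sub_apply, Matrix.mul_apply, Finset.sum_mul]
    rw [Finset.sum_comm]
    simp [Yblk, betaBlk]
  · simp [Matrix.sub_apply, Matrix.mul_apply, Yblk, betaBlk, Matrix.updateRow_apply, h]

theorem aux_solve (n k l : ℕ)
    (A : Matrix (Fin (k + l)) (Fin (k + l)) (SuperAlg n))
    (hX : IsUnit (Xblk n k l A))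
    (x y : Fin (k + l) → SuperAlg n)
    (hxy : ∀ j, ∑ p, x p * A p j = y j) (j : Fin l) :
    (y (Fin.natAdd k j) - ∑ r : Fin k, ∑ q : Fin k,
              y (Fin.castAdd l r) * Ring.inverse (Xblk n k l A) r q *
                alphaBlk n k l A q j) =
    ∑ p, x (Fin.natAdd k p) * (Yblk n k l A -
      betaBlk n k l A * Ring.inverse (Xblk n k l A) * alphaBlk n k l A) p j := by
  set Z := Ring.inverse (Xblk n k l A) with hZ
  set x1 : Fin k → SuperAlg n := fun r => x (Fin.castAdd l r) with hx1
  set x2 : Fin l → SuperAlg n := fun r => x (Fin.natAdd k r) with hx2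
  have h1 : (fun r => y (Fin.castAdd l r)) =
      Matrix.vecMul x1 (Xblk n k l A) + Matrix.vecMul x2 (betaBlk n k l A) := by
    funext r
    rw [← hxy, Fin.sum_univ_add]
    rfl
  have h2 : (fun r => y (Fin.natAdd k r)) =
      Matrix.vecMul x1 (alphaBlk n k l A) + Matrix.vecMul x2 (Yblk n k l A) := by
    funext r
    rw [← hxy, Fin.sum_univ_add]
    rfl
  have h3 : (fun r => y (Fin.natAdd k r)) -
      Matrix.vecMul (Matrix.vecMul (fun r => y (Fin.castAdd l r)) Z) (alphaBlk n k l A) =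
      Matrix.vecMul x2 (Yblk n k l A - betaBlk n k l A * Z * alphaBlk n k l A) := by
    rw [h1, h2, Matrix.add_vecMul, Matrix.add_vecMul, Matrix.vecMul_vecMul x1,
      Matrix.vecMul_vecMul x2, hZ, Ring.mul_inverse_cancel _ hX, Matrix.vecMul_one, Matrix.vecMul_vecMul, Matrix.vecMul_sub]
    abel
  have h4 := congrFun h3 j
  simp only [Pi.sub_apply, Matrix.vecMul, dotProduct, Finset.sum_mul] at h4
  rw [Finset.sum_comm] at h4
  exact h4

end Blocks

/-- **super Cramer's rule, odd positions.**  Let `A = [[X, α],[β, Y]]` be an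
invertible even `(k|l+1)`-supermatrix over `Λ` (equivalently, `X` and `Y` are both invertible)
and let `x·A = y` for row vectors `x`, `y`.  Then for every odd index `i`:
`x_i·det(Y − β·X⁻¹·α) = Σ_j (y″ − y′·X⁻¹·α)_j·C_{(i−k)j}`, where `C_{(i−k)j}` is the
`(i−k, j)`-cofactor of `Y − β·X⁻¹·α`; equivalently, `x_i = ber*(A_i(y))·ber*(A)⁻¹`, where
`A_i(y)` is obtained by replacing the `i`-th row of `A` with `y`. -/
theorem statement7 (n k l : ℕ)
    (A : Matrix (Fin (k + (l + 1))) (Fin (k + (l + 1))) (SuperAlg n))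
    (hA : IsEvenSupermatrix n k (l + 1) A)
    (hX : IsUnit (Xblk n k (l + 1) A)) (hY : IsUnit (Yblk n k (l + 1) A))
    (x y : Fin (k + (l + 1)) → SuperAlg n)
    (hxy : ∀ j, ∑ p, x p * A p j = y j)
    (i : Fin (l + 1)) :
    x (Fin.natAdd k i) *
        ncdet (Yblk n k (l + 1) A -
          betaBlk n k (l + 1) A * Ring.inverse (Xblk n k (l + 1) A) * alphaBlk n k (l + 1) A)
      = (∑ j : Fin (l + 1),
          (y (Fin.natAdd k j) -
            ∑ r : Fin k, ∑ q : Fin k,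
              y (Fin.castAdd (l + 1) r) * Ring.inverse (Xblk n k (l + 1) A) r q *
                alphaBlk n k (l + 1) A q j) *
          (((-1 : ℤ) ^ ((i : ℕ) + (j : ℕ))) •
            ncdet ((Yblk n k (l + 1) A -
              betaBlk n k (l + 1) A * Ring.inverse (Xblk n k (l + 1) A) *
                alphaBlk n k (l + 1) A).submatrix i.succAbove j.succAbove))) ∧
    x (Fin.natAdd k i)
      = berStar n k (l + 1) (A.updateRow (Fin.natAdd k i) y) *
          Ring.inverse (berStar n k (l + 1) A) := by
  obtain ⟨hXe, hYe, hae, hbe⟩ := hA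
  have hXc : ∀ a b, Xblk n k (l + 1) A a b ∈ Subring.center (SuperAlg n) :=
    fun a b => even_center (hXe a b)
  obtain ⟨X', hX'⟩ := aux_lift _ hXc
  obtain ⟨Y', hY'⟩ := aux_lift _ (fun a b => even_center (hYe a b))
  have hZc := aux_inv _ hXc hX
  choose t ht htn using fun (a : Fin (l + 1)) (b : Fin (l + 1)) (q r : Fin k) =>
    aux_term (hbe a q) (hae r b) (hZc q r)
  set N : Matrix (Fin (l + 1)) (Fin (l + 1)) (Subring.center (SuperAlg n)) :=
    fun a b => ∑ r, ∑ q, t a b q r with hN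
  have hNn : ∀ a b, IsNilpotent (N a b) := by
    intro a b
    rw [← mem_nilradical]
    exact sum_mem fun r _ => sum_mem fun q _ => mem_nilradical.2 (htn a b q r)
  have hM : Yblk n k (l + 1) A -
      betaBlk n k (l + 1) A * Ring.inverse (Xblk n k (l + 1) A) * alphaBlk n k (l + 1) A =
      (Y' - N).map (Subring.center (SuperAlg n)).subtype := by
    ext a b
    rw [Matrix.sub_apply, hY', Matrix.mul_apply, Matrix.map_apply, Matrix.map_apply,
      Matrix.sub_apply, map_sub, hN, map_sum]
    congr 1
    refine Finset.sum_congr rfl fun r _ => ?_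
    rw [Matrix.mul_apply, Finset.sum_mul, map_sum]
    exact Finset.sum_congr rfl fun q _ => (ht a b q r).symm
  have hdX : IsUnit X'.det := aux_det_unit X' (hX' ▸ hX)
  have hdM : IsUnit (Y' - N).det := aux_det_nil _ _ hNn (aux_det_unit Y' (hY' ▸ hY))
  have hw := aux_solve n k (l + 1) A hX x y hxy
  have hcr := aux_cramer (Y' - N) i (fun p => x (Fin.natAdd k p)) _
    (fun j => (hw j).trans (by rw [hM]; rfl))
  obtain ⟨hb1, hb2⟩ := aux_blocks n k (l + 1) A i y
  constructor
  · rw [hM, ncdet_map, ← hcr]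
    refine Finset.sum_congr rfl fun j _ => ?_
    congr 1
    rw [Matrix.submatrix_map, ncdet_map, Matrix.adjugate_fin_succ_eq_det_submatrix]
    rw [zsmul_eq_mul]
    push_cast
    rfl
  · have hB : berStar n k (l + 1) (A.updateRow (Fin.natAdd k i) y) =
        x (Fin.natAdd k i) * berStar n k (l + 1) A := by
      unfold berStar
      rw [hb1, hb2, hM, ncdet_updateRow, hcr, hX', ncdet_map, ncdet_map]
      obtain ⟨u, hu⟩ := hdX
      have : Ring.inverse ((X'.det : Subring.center (SuperAlg n)) : SuperAlg n) =
          ((↑u⁻¹ : Subring.center (SuperAlg n)) : SuperAlg n) := by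
        rw [← hu]
        exact Ring.inverse_unit (Units.map (Subring.center (SuperAlg n)).subtype.toMonoidHom u)
      rw [this, ← mul_assoc, ← mul_assoc, aux_comm (↑u⁻¹ : Subring.center (SuperAlg n)) (x _)]
    have hU : IsUnit (berStar n k (l + 1) A) := by
      unfold berStar
      rw [hM, hX', ncdet_map, ncdet_map]
      exact (hdX.map (Subring.center (SuperAlg n)).subtype).ringInverse.mul
        (hdM.map (Subring.center (SuperAlg n)).subtype)
    rw [hB, mul_assoc, Ring.mul_inverse_cancel _ hU, mul_one]

end
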